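/- Let h : S¹ → ℝ³ be a C^∞ map, let ξ ∈ ℝ³ be a unit vector, and let π : ℝ³ → ℝ be the projection π(x) = ⟨x, ξ⟩. Suppose the function π ∘ h : S¹ → ℝ has exactly n local extremum points (n finite and positive), of which exactly s are absolute extrema, and that s > n/2 + 1. Then for every C^∞ map H : ℝ² → ℝ³ with H = h on S¹ whose derivative is injective at every point of the closed unit disk B̄² (an immersed disk spanned by h), there exists a point x ∈ B̄² at which the derivative of π ∘ H vanishes; equivalently, the tangent plane of the immersed surface at x is orthogonal to ξ, i.e., the normal direction at x is parallel to ξ. -/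

import Mathlib

open scoped RealInnerProductSpace

noncomputable section

abbrev E2 : Type := EuclideanSpace ℝ (Fin 2)

abbrev E3 : Type := EuclideanSpace ℝ (Fin 3)

/-- The point (cos t, sin t) on the unit circle in ℝ². -/
def sphPt (t : ℝ) : E2 := (EuclideanSpace.equiv (Fin 2) ℝ).symm ![Real.cos t, Real.sin t]

/-!
Let `f` be the height function on the disk and suppose that it has no critical point. The disk
being simply connected, the gradient of `f` has a continuous polar angle there. Measured along the
boundary circle from the outward normal, this angle changes by `-2π` in one turn, because the
normal itself turns once. The angle is a multiple of `π` at each local extremum of the boundary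
values, and between consecutive extrema the gradient keeps a constant tangential direction, so
that the angle changes by `π / 2` times the sum of the indices `±1` of the two extrema. Hence the
indices add up to `-2`. By the maximum principle the gradient points outward at absolute maxima
and inward at absolute minima; there the index is `-1`, so `-2 ≤ n - 2 s`.
-/

open Set Filter Topology Real

section Combinatorics

lemma sum_eq_sub_of_consecutive {ι M : Type*} [LinearOrder ι] [AddCommGroup M] {E : Set ι}
    {u w : ι → M}
    (hstep : ∀ a ∈ E, ∀ b ∈ E, a < b → Disjoint (Ioo a b) E → w a = u b - u a)
    {a b : ι} (ha : a ∈ E) (hb : b ∈ E) (hab : a ≤ b) {F : Finset ι}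
    (hF : (F : Set ι) = Ico a b ∩ E) : ∑ t ∈ F, w t = u b - u a := by
  induction F using Finset.induction_on_max generalizing b with
  | empty =>
    obtain rfl : a = b := by
      by_contra hne
      have : a ∈ Ico a b ∩ E := ⟨⟨le_rfl, hab.lt_of_ne hne⟩, ha⟩
      simp [← hF] at this
    simp
  | insert m F hm ih =>
    have mem_iff (t : ι) : t = m ∨ t ∈ F ↔ (a ≤ t ∧ t < b) ∧ t ∈ E := by
      simpa using Set.ext_iff.1 hF t
    obtain ⟨⟨ham, hmb⟩, hmE⟩ := (mem_iff m).1 (.inl rfl)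
    have hFm : (F : Set ι) = Ico a m ∩ E := by
      ext t
      have := hm t
      grind
    have hgap : Disjoint (Ioo m b) E := by
      rw [Set.disjoint_left]
      intro t ht htE
      have := hm t
      grind
    rw [Finset.sum_insert fun h ↦ (hm m h).false, ih hmE ham hFm, hstep m hmE b hb hmb hgap]
    abel

lemma exists_sum_eq_sub_of_periodic {ι M : Type*} [AddCommGroup ι] [LinearOrder ι]
    [IsOrderedAddMonoid ι] [AddCommGroup M] {E : Set ι} {u w : ι → M}
    (hstep : ∀ a ∈ E, ∀ b ∈ E, a < b → Disjoint (Ioo a b) E → w a = u b - u a)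
    {c p : ι} (hp : 0 ≤ p) (hE : ∀ t, t + p ∈ E ↔ t ∈ E) {T : Finset ι}
    (hT : (T : Set ι) = Ico c (c + p) ∩ E) (hne : T.Nonempty) :
    ∃ a ∈ E, ∑ t ∈ T, w t = u (a + p) - u a := by
  have mem_iff (t : ι) : t ∈ T ↔ (c ≤ t ∧ t < c + p) ∧ t ∈ E := Set.ext_iff.1 hT t
  obtain ⟨a, haT, hmin⟩ : ∃ a ∈ T, ∀ t ∈ T, a ≤ t := T.exists_min_image id hne
  obtain ⟨⟨hca, hac⟩, haE⟩ := (mem_iff a).1 haT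
  have hTa : (T : Set ι) = Ico a (a + p) ∩ E := by
    ext t
    refine ⟨fun ht ↦ ?_, fun ⟨⟨hat, htp⟩, htE⟩ ↦ (mem_iff t).2 ⟨⟨hca.trans hat, ?_⟩, htE⟩⟩
    · obtain ⟨⟨-, htc⟩, htE⟩ := (mem_iff t).1 ht
      exact ⟨⟨hmin t ht, htc.trans_le (by gcongr)⟩, htE⟩
    · by_contra! hle
      have hmem : t - p ∈ T := (mem_iff _).2
        ⟨⟨le_sub_iff_add_le.2 hle, (sub_lt_iff_lt_add.2 htp).trans hac⟩,
          (hE _).1 (by rwa [sub_add_cancel])⟩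
      exact (sub_lt_iff_lt_add.2 htp).not_ge (hmin _ hmem)
  exact ⟨a, haE, sum_eq_sub_of_consecutive hstep haE ((hE a).2 haE)
    (le_add_of_nonneg_right hp) hTa⟩

lemma sum_le_card_sub_two_mul_card {ι R : Type*} [CommRing R] [PartialOrder R] [IsOrderedRing R]
    {S T : Finset ι} (hST : S ⊆ T) {w : ι → R} (hT : ∀ t ∈ T, w t ≤ 1) (hS : ∀ t ∈ S, w t = -1) :
    ∑ t ∈ T, w t ≤ T.card - 2 * S.card := by
  classical
  calc ∑ t ∈ T, w t = ∑ t ∈ T \ S, w t + ∑ t ∈ S, w t := (Finset.sum_sdiff hST).symm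
    _ ≤ ∑ t ∈ T \ S, 1 + ∑ t ∈ S, (-1) := by
      gcongr with t ht t ht
      · exact hT t (Finset.sdiff_subset ht)
      · exact (hS t ht).le
    _ = T.card - 2 * S.card := by
      rw [← Finset.card_sdiff_add_card_eq_card hST]
      simp
      ring

end Combinatorics

section LocalExtrema

variable {X β : Type*} [TopologicalSpace X] [Preorder β]

lemma not_isLocalMax_left_of_strictMonoOn [LinearOrder X] [OrderTopology X] [DenselyOrdered X]
    {g : X → β} {a b : X} (hab : a < b) (hg : StrictMonoOn g (Icc a b)) : ¬IsLocalMax g a := by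
  intro hmax
  have := nhdsGT_neBot_of_exists_gt ⟨b, hab⟩
  obtain ⟨x, hx, hax, hxb⟩ :=
    ((hmax.filter_mono nhdsWithin_le_nhds).and (Ioo_mem_nhdsGT hab)).exists
  exact (hg (left_mem_Icc.2 hab.le) ⟨hax.le, hxb.le⟩ hax).not_ge hx

lemma not_isLocalMin_right_of_strictMonoOn [LinearOrder X] [OrderTopology X] [DenselyOrdered X]
    {g : X → β} {a b : X} (hab : a < b) (hg : StrictMonoOn g (Icc a b)) : ¬IsLocalMin g b := by
  intro hmin
  have := nhdsLT_neBot_of_exists_lt ⟨a, hab⟩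
  obtain ⟨x, hx, hax, hxb⟩ :=
    ((hmin.filter_mono nhdsWithin_le_nhds).and (Ioo_mem_nhdsLT hab)).exists
  exact (hg ⟨hax.le, hxb.le⟩ (right_mem_Icc.2 hab.le) hxb).not_ge hx

lemma isLocalMax_add_iff_of_periodic [AddGroup X] [IsTopologicalAddGroup X] {g : X → β} {p : X}
    (hg : Function.Periodic g p) (t : X) : IsLocalMax g (t + p) ↔ IsLocalMax g t := by
  rw [IsLocalMax, IsMaxFilter, ← map_add_right_nhds p t, eventually_map]
  simp only [hg _, IsLocalMax, IsMaxFilter]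

lemma isLocalExtr_add_iff_of_periodic [AddGroup X] [IsTopologicalAddGroup X] {g : X → β} {p : X}
    (hg : Function.Periodic g p) (t : X) : IsLocalExtr g (t + p) ↔ IsLocalExtr g t :=
  or_congr (isLocalMax_add_iff_of_periodic (β := βᵒᵈ) hg t) (isLocalMax_add_iff_of_periodic hg t)

lemma not_isLocalMax_of_finite_isLocalExtr {X β : Type*} [LinearOrder X] [DenselyOrdered X]
    [TopologicalSpace X] [OrderTopology X] [PartialOrder β] {g : X → β} {a b t : X}
    (hfin : (Ico a b ∩ {x | IsLocalExtr g x}).Finite) (ht : t ∈ Ico a b) (hmin : IsLocalMin g t) :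
    ¬IsLocalMax g t := by
  intro hmax
  have hconst : ∀ᶠ x in 𝓝 t, g x = g t := (hmin.and hmax).mono fun x h ↦ h.2.antisymm h.1
  have hextr : ∀ᶠ y in 𝓝 t, IsLocalExtr g y := hconst.eventually_nhds.mono fun y hy ↦
    .inl (hy.mono fun x hx ↦ (hy.self_of_nhds.trans hx.symm).le)
  have hmem : Ico a b ∩ {x | IsLocalExtr g x} ∈ 𝓝[>] t :=
    inter_mem (mem_of_superset (Ioo_mem_nhdsGT ht.2) fun x hx ↦ ⟨ht.1.trans hx.1.le, hx.2⟩)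
      (nhdsWithin_le_nhds hextr)
  obtain ⟨y, hy, hsub⟩ := (mem_nhdsGT_iff_exists_Ioo_subset' ht.2).1 hmem
  exact (Ioo_infinite hy).mono hsub hfin

lemma strictMonoOn_or_strictAntiOn_of_not_isLocalExtr {X β : Type*}
    [ConditionallyCompleteLinearOrder X] [DenselyOrdered X] [TopologicalSpace X] [OrderTopology X]
    [LinearOrder β] [TopologicalSpace β] [OrderTopology β] {g : X → β} {a b : X} (hab : a ≤ b)
    (hg : ContinuousOn g (Icc a b)) (hno : ∀ t ∈ Ioo a b, ¬IsLocalExtr g t) :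
    StrictMonoOn g (Icc a b) ∨ StrictAntiOn g (Icc a b) := by
  have hne : ∀ x ∈ Icc a b, ∀ y ∈ Icc a b, x < y → g x ≠ g y := by
    intro x hx y hy hxy heq
    obtain ⟨t, ht, hextr⟩ := exists_isLocalExtr_Ioo hxy (hg.mono (Icc_subset_Icc hx.1 hy.2)) heq
    exact hno t ⟨hx.1.trans_lt ht.1, ht.2.trans_le hy.2⟩ hextr
  refine hg.strictMonoOn_of_injOn_Icc' hab fun x hx y hy heq ↦ ?_
  rcases lt_trichotomy x y with hlt | rfl | hlt
  · exact absurd heq (hne x hx y hy hlt)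
  · rfl
  · exact absurd heq.symm (hne y hy x hx hlt)

end LocalExtrema

section Angle

-- `α - arccos (cos α)` takes its values in the discrete group `2πℤ` wherever `0 ≤ sin α`.
lemma sub_eq_arccos_sub_arccos {X : Type*} [TopologicalSpace X] {s : Set X} (hs : IsPreconnected s)
    {α : X → ℝ} (hα : ContinuousOn α s) (hsin : ∀ t ∈ s, 0 ≤ sin (α t)) {a b : X} (ha : a ∈ s)
    (hb : b ∈ s) : α b - α a = arccos (cos (α b)) - arccos (cos (α a)) := by
  have hmem : MapsTo (fun t ↦ α t - arccos (cos (α t))) s (AddSubgroup.zmultiples (2 * π)) := by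
    intro t ht
    have hangle : (α t : Angle) = arccos (cos (α t)) := by
      refine Angle.cos_sin_inj ?_ ?_
      · rw [cos_arccos (neg_one_le_cos _) (cos_le_one _)]
      · rw [sin_arccos, ← sin_sq, sqrt_sq (hsin t ht)]
    obtain ⟨k, hk⟩ := Angle.angle_eq_iff_two_pi_dvd_sub.1 hangle
    exact ⟨k, by simp [hk, mul_comm]⟩
  have hdiscrete : DiscreteTopology (AddSubgroup.zmultiples (2 * π)) := inferInstance
  have := hs.constant_of_mapsTo ⟨hdiscrete⟩ (by fun_prop) hmem ha hb
  linarith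

lemma arccos_cos_of_sin_eq_zero {x : ℝ} (hx : sin x = 0) :
    arccos (cos x) = π / 2 * (1 - cos x) := by
  rcases sin_eq_zero_iff_cos_eq.1 hx with h | h
  · simp [h]
  · rw [h, arccos_neg_one]
    ring

end Angle

section BoundaryIndex

/-- The index of a local extremum `t` of the boundary values `g` of a planar function whose gradient
makes the angle `α t` with the outward normal: `-1` at a maximum with outward gradient or a minimum
with inward gradient, and `1` otherwise. It is `±1` as `α t` is then a multiple of `π`; it is kept
real-valued because it is compared with `α`. -/
def boundaryIndex (g α : ℝ → ℝ) (t : ℝ) : ℝ :=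
  open scoped Classical in if IsLocalMax g t then -cos (α t) else cos (α t)

variable {g α ρ : ℝ → ℝ}

lemma boundaryIndex_of_isLocalMax {t : ℝ} (ht : IsLocalMax g t) :
    boundaryIndex g α t = -cos (α t) :=
  if_pos ht

lemma boundaryIndex_of_not_isLocalMax {t : ℝ} (ht : ¬IsLocalMax g t) :
    boundaryIndex g α t = cos (α t) :=
  if_neg ht

lemma boundaryIndex_le_one (g α : ℝ → ℝ) (t : ℝ) : boundaryIndex g α t ≤ 1 := by
  unfold boundaryIndex
  split_ifs
  · linarith [neg_one_le_cos (α t)]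
  · exact cos_le_one _

lemma boundaryIndex_periodic {p : ℝ} {m : ℤ} (hg : Function.Periodic g p)
    (hturn : ∀ t, α (t + p) = α t + m * (2 * π)) :
    Function.Periodic (boundaryIndex g α) p := by
  intro t
  have hcos : cos (α (t + p)) = cos (α t) := by rw [hturn, cos_add_int_mul_two_pi]
  by_cases ht : IsLocalMax g t
  · have htp : IsLocalMax g (t + p) := (isLocalMax_add_iff_of_periodic hg t).2 ht
    rw [boundaryIndex_of_isLocalMax htp, boundaryIndex_of_isLocalMax ht, hcos]
  · have htp : ¬IsLocalMax g (t + p) := mt (isLocalMax_add_iff_of_periodic hg t).1 ht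
    rw [boundaryIndex_of_not_isLocalMax htp, boundaryIndex_of_not_isLocalMax ht, hcos]

lemma sin_eq_zero_of_isLocalExtr {t : ℝ} (hρ : 0 < ρ t) (hg : HasDerivAt g (ρ t * sin (α t)) t)
    (ht : IsLocalExtr g t) : sin (α t) = 0 :=
  (mul_eq_zero.1 (ht.hasDerivAt_eq_zero hg)).resolve_left hρ.ne'

lemma angle_sub_eq_of_monotoneOn (hα : Continuous α) (hρ : ∀ t, 0 < ρ t)
    (hg : ∀ t, HasDerivAt g (ρ t * sin (α t)) t) {a b : ℝ} (hab : a < b)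
    (hmono : MonotoneOn g (Icc a b)) (ha : sin (α a) = 0) (hb : sin (α b) = 0) :
    α b - α a = π / 2 * (cos (α a) - cos (α b)) := by
  have hsin : ∀ t ∈ Icc a b, 0 ≤ sin (α t) := by
    intro t ht
    have hderiv : 0 ≤ derivWithin g (Icc a b) t := hmono.derivWithin_nonneg
    rw [(hg t).hasDerivWithinAt.derivWithin (uniqueDiffOn_Icc hab t ht)] at hderiv
    exact nonneg_of_mul_nonneg_right hderiv (hρ t)
  rw [sub_eq_arccos_sub_arccos isPreconnected_Icc hα.continuousOn hsin (left_mem_Icc.2 hab.le)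
    (right_mem_Icc.2 hab.le), arccos_cos_of_sin_eq_zero ha, arccos_cos_of_sin_eq_zero hb]
  ring

lemma angle_sub_eq_of_antitoneOn (hα : Continuous α) (hρ : ∀ t, 0 < ρ t)
    (hg : ∀ t, HasDerivAt g (ρ t * sin (α t)) t) {a b : ℝ} (hab : a < b)
    (hanti : AntitoneOn g (Icc a b)) (ha : sin (α a) = 0) (hb : sin (α b) = 0) :
    α b - α a = π / 2 * (cos (α b) - cos (α a)) := by
  have hgneg : ∀ t, HasDerivAt (-g) (ρ t * sin ((-α) t)) t := fun t ↦ by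
    simpa only [Pi.neg_apply, sin_neg, mul_neg] using (hg t).neg
  have hneg := angle_sub_eq_of_monotoneOn hα.neg hρ hgneg hab hanti.neg
    (by simpa using ha) (by simpa using hb)
  simp only [Pi.neg_apply, cos_neg] at hneg
  linarith

lemma angle_sub_eq_boundaryIndex_add_boundaryIndex (hα : Continuous α) (hρ : ∀ t, 0 < ρ t)
    (hg : ∀ t, HasDerivAt g (ρ t * sin (α t)) t) {a b : ℝ} (hab : a < b)
    (ha : IsLocalExtr g a) (hb : IsLocalExtr g b) (hno : ∀ t ∈ Ioo a b, ¬IsLocalExtr g t) :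
    α b - α a = π / 2 * (boundaryIndex g α a + boundaryIndex g α b) := by
  have hsa := sin_eq_zero_of_isLocalExtr (hρ a) (hg a) ha
  have hsb := sin_eq_zero_of_isLocalExtr (hρ b) (hg b) hb
  have hgc : ContinuousOn g (Icc a b) := fun t _ ↦ (hg t).continuousAt.continuousWithinAt
  rcases strictMonoOn_or_strictAntiOn_of_not_isLocalExtr hab.le hgc hno with hmono | hanti
  · have hamax : ¬IsLocalMax g a := not_isLocalMax_left_of_strictMonoOn hab hmono
    have hbmin : ¬IsLocalMin g b := not_isLocalMin_right_of_strictMonoOn hab hmono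
    rw [angle_sub_eq_of_monotoneOn hα hρ hg hab hmono.monotoneOn hsa hsb,
      boundaryIndex_of_not_isLocalMax hamax, boundaryIndex_of_isLocalMax (hb.resolve_left hbmin)]
    ring
  · have hamin : ¬IsLocalMin g a :=
      not_isLocalMax_left_of_strictMonoOn (β := ℝᵒᵈ) hab hanti.dual_right
    have hbmax : ¬IsLocalMax g b :=
      not_isLocalMin_right_of_strictMonoOn (β := ℝᵒᵈ) hab hanti.dual_right
    rw [angle_sub_eq_of_antitoneOn hα hρ hg hab hanti.antitoneOn hsa hsb,
      boundaryIndex_of_isLocalMax (ha.resolve_left hamin), boundaryIndex_of_not_isLocalMax hbmax]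
    ring

-- The step lemma telescopes for `α / π - boundaryIndex g α / 2`.
lemma sum_boundaryIndex_eq_two_mul (hα : Continuous α) (hρ : ∀ t, 0 < ρ t)
    (hg : ∀ t, HasDerivAt g (ρ t * sin (α t)) t) {c p : ℝ} (hp : 0 ≤ p)
    (hper : Function.Periodic g p) {m : ℤ} (hturn : ∀ t, α (t + p) = α t + m * (2 * π))
    {T : Finset ℝ} (hT : (T : Set ℝ) = Ico c (c + p) ∩ {t | IsLocalExtr g t}) (hne : T.Nonempty) :
    ∑ t ∈ T, boundaryIndex g α t = 2 * m := by
  have hstep : ∀ a ∈ {t | IsLocalExtr g t}, ∀ b ∈ {t | IsLocalExtr g t}, a < b →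
      Disjoint (Ioo a b) {t | IsLocalExtr g t} → boundaryIndex g α a =
        (α b / π - boundaryIndex g α b / 2) - (α a / π - boundaryIndex g α a / 2) := by
    intro a ha b hb hab hgap
    have h := angle_sub_eq_boundaryIndex_add_boundaryIndex hα hρ hg hab ha hb
      fun t ht ↦ Set.disjoint_left.1 hgap ht
    field_simp
    linarith
  obtain ⟨a, -, hsum⟩ := exists_sum_eq_sub_of_periodic hstep hp
    (isLocalExtr_add_iff_of_periodic hper) hT hne
  rw [hsum, boundaryIndex_periodic hper hturn, hturn]
  field_simp
  ring

end BoundaryIndex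

section MaximumPrinciple

variable {E : Type*} [NormedAddCommGroup E] [NormedSpace ℝ E] {f : E → ℝ} {K : Set E} {x : E}

lemma isMaxOn_of_isMaxOn_frontier (hK : IsCompact K) (hf : ContinuousOn f K)
    (hcrit : ∀ y ∈ interior K, fderiv ℝ f y ≠ 0) (hx : IsMaxOn f (frontier K) x) :
    IsMaxOn f K x := by
  intro y hy
  obtain ⟨z, hzK, hz⟩ := hK.exists_isMaxOn ⟨y, hy⟩ hf
  have hzint : z ∉ interior K := fun h ↦
    hcrit z h (hz.isLocalMax (mem_interior_iff_mem_nhds.1 h)).fderiv_eq_zero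
  have hzfr : z ∈ frontier K := by
    rw [hK.isClosed.frontier_eq]
    exact ⟨hzK, hzint⟩
  calc f y ≤ f z := hz hy
    _ ≤ f x := hx hzfr

lemma fderiv_sub_nonpos_of_isMaxOn (hK : Convex ℝ K) (hf : DifferentiableAt ℝ f x)
    (hx : IsMaxOn f K x) (hxK : x ∈ K) {y : E} (hy : y ∈ K) : fderiv ℝ f x (y - x) ≤ 0 :=
  hx.localize.hasFDerivWithinAt_nonpos hf.hasFDerivAt.hasFDerivWithinAt
    (sub_mem_posTangentConeAt_of_segment_subset (hK.segment_subset hxK hy))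

variable [ProperSpace E] {c : E} {r : ℝ}

lemma fderiv_radial_nonneg_of_isMaxOn_sphere (hf : ContinuousOn f (Metric.closedBall c r))
    (hcrit : ∀ y ∈ Metric.ball c r, fderiv ℝ f y ≠ 0) (hfx : DifferentiableAt ℝ f x)
    (hx : x ∈ Metric.sphere c r) (hmax : IsMaxOn f (Metric.sphere c r) x) :
    0 ≤ fderiv ℝ f x (x - c) := by
  rcases eq_or_ne r 0 with rfl | hr
  · obtain rfl : x = c := by simpa using hx
    simp
  have hmax' : IsMaxOn f (Metric.closedBall c r) x :=
    isMaxOn_of_isMaxOn_frontier (isCompact_closedBall c r) hf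
      (by rwa [interior_closedBall c hr]) (by rwa [frontier_closedBall c hr])
  have hr0 : 0 ≤ r := Metric.nonneg_of_mem_sphere hx
  have := fderiv_sub_nonpos_of_isMaxOn (convex_closedBall c r) hfx hmax'
    (Metric.sphere_subset_closedBall hx) (Metric.mem_closedBall_self hr0)
  rw [← neg_sub, map_neg]
  exact neg_nonneg.2 this

end MaximumPrinciple

section PolarForm

lemma exists_continuousOn_exp_eq {E : Type*} [NormedAddCommGroup E] [NormedSpace ℝ E] {K : Set E}
    (hK : IsCompact K) (hconv : Convex ℝ K) {G : E → ℂ} (hG : Continuous G)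
    (hG0 : ∀ x ∈ K, G x ≠ 0) :
    ∃ L : E → ℂ, ContinuousOn L K ∧ ∀ x ∈ K, Complex.exp (L x) = G x := by
  rcases K.eq_empty_or_nonempty with rfl | hne
  · simp
  obtain ⟨δ, hδ, hsub⟩ :=
    hK.exists_thickening_subset_open (isOpen_ne_fun hG continuous_const) hG0
  have hKδ : K ⊆ Metric.thickening δ K := Metric.self_subset_thickening hδ K
  have := (hconv.thickening δ).contractibleSpace (hne.mono hKδ)
  have hsc : IsSimplyConnected (Metric.thickening δ K) :=
    inferInstanceAs (SimplyConnectedSpace (Metric.thickening δ K))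
  obtain ⟨L, hL, hexp⟩ := Complex.exists_continuousOn_eqOn_exp_comp hsc Metric.isOpen_thickening
    hG.continuousOn fun ⟨x, hx, h0⟩ ↦ hsub hx h0
  exact ⟨L, hL.mono hKδ, fun x hx ↦ hexp (hKδ hx)⟩

@[simp] lemma sphPt_apply_zero (t : ℝ) : sphPt t 0 = cos t := rfl

@[simp] lemma sphPt_apply_one (t : ℝ) : sphPt t 1 = sin t := rfl

lemma smul_sphPt_add_smul_sphPt (x : E2) : x 0 • sphPt 0 + x 1 • sphPt (π / 2) = x := by
  ext i
  fin_cases i <;> simp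

lemma sphPt_periodic : Function.Periodic sphPt (2 * π) := by
  intro t
  simp [sphPt]

lemma hasDerivAt_sphPt (t : ℝ) : HasDerivAt sphPt (sphPt (t + π / 2)) t := by
  have hcurve : HasDerivAt (fun t ↦ cos t • sphPt 0 + sin t • sphPt (π / 2))
      (-sin t • sphPt 0 + cos t • sphPt (π / 2)) t :=
    ((hasDerivAt_cos t).smul_const _).add ((hasDerivAt_sin t).smul_const _)
  convert hcurve using 1
  · exact funext fun t ↦ (smul_sphPt_add_smul_sphPt (sphPt t)).symm
  · rw [← smul_sphPt_add_smul_sphPt (sphPt (t + π / 2))]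
    simp [cos_add_pi_div_two, sin_add_pi_div_two]

lemma continuous_sphPt : Continuous sphPt :=
  continuous_iff_continuousAt.2 fun t ↦ (hasDerivAt_sphPt t).continuousAt

lemma range_sphPt : range sphPt = Metric.sphere 0 1 := by
  refine Subset.antisymm (range_subset_iff.2 fun t ↦ by simp [EuclideanSpace.norm_eq]) ?_
  intro x hx
  have hnorm : ‖(⟨x 0, x 1⟩ : ℂ)‖ = 1 := by
    rw [← mem_sphere_zero_iff_norm.1 hx, EuclideanSpace.norm_eq, Complex.norm_eq_sqrt_sq_add_sq]
    simp
  obtain ⟨t, ht⟩ := (Complex.norm_eq_one_iff _).1 hnorm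
  refine ⟨t, ?_⟩
  ext i
  fin_cases i
  · simpa [Complex.exp_ofReal_mul_I_re] using congrArg Complex.re ht
  · simpa [Complex.exp_ofReal_mul_I_im] using congrArg Complex.im ht

lemma exists_polar_form {K : Set E2} (hK : IsCompact K) (hconv : Convex ℝ K)
    {ω : E2 → E2 →L[ℝ] ℝ} (hω : Continuous ω) (hω0 : ∀ x ∈ K, ω x ≠ 0) :
    ∃ θ ρ : E2 → ℝ, ContinuousOn θ K ∧ (∀ x, 0 < ρ x) ∧
      ∀ x ∈ K, ∀ s, ω x (sphPt s) = ρ x * cos (θ x - s) := by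
  let G : E2 → ℂ := fun x ↦ ω x (sphPt 0) + ω x (sphPt (π / 2)) * Complex.I
  have hG0 : ∀ x ∈ K, G x ≠ 0 := by
    intro x hx hGx
    refine hω0 x hx (ContinuousLinearMap.ext fun y ↦ ?_)
    have hre : ω x (sphPt 0) = 0 := by simpa [G] using congrArg Complex.re hGx
    have him : ω x (sphPt (π / 2)) = 0 := by simpa [G] using congrArg Complex.im hGx
    rw [← smul_sphPt_add_smul_sphPt y]
    simp [hre, him]
  obtain ⟨L, hL, hexp⟩ := exists_continuousOn_exp_eq hK hconv (G := G) (by fun_prop) hG0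
  refine ⟨fun x ↦ (L x).im, fun x ↦ exp (L x).re, by fun_prop, fun x ↦ exp_pos _, ?_⟩
  intro x hx s
  have hre : ω x (sphPt 0) = exp (L x).re * cos (L x).im := by
    simpa [G, Complex.exp_re] using (congrArg Complex.re (hexp x hx)).symm
  have him : ω x (sphPt (π / 2)) = exp (L x).re * sin (L x).im := by
    simpa [G, Complex.exp_im] using (congrArg Complex.im (hexp x hx)).symm
  rw [← smul_sphPt_add_smul_sphPt (sphPt s), map_add, map_smul, map_smul, hre, him, cos_sub]
  simp only [sphPt_apply_zero, sphPt_apply_one, smul_eq_mul]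
  ring

end PolarForm

section Disk

variable {f : E2 → ℝ}

lemma exists_polar_fderiv_on_circle (hf : ContDiff ℝ 1 f)
    (hcrit : ∀ x ∈ Metric.closedBall (0 : E2) 1, fderiv ℝ f x ≠ 0) :
    ∃ α ρ : ℝ → ℝ, Continuous α ∧ (∀ t, 0 < ρ t) ∧ (∀ t, α (t + 2 * π) = α t - 2 * π) ∧
      (∀ t, fderiv ℝ f (sphPt t) (sphPt t) = ρ t * cos (α t)) ∧
      ∀ t, HasDerivAt (f ∘ sphPt) (ρ t * sin (α t)) t := by
  have hmem (t : ℝ) : sphPt t ∈ Metric.closedBall 0 1 :=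
    Metric.sphere_subset_closedBall (range_sphPt ▸ mem_range_self t)
  obtain ⟨θ, ρ, hθ, hρ, hpolar⟩ := exists_polar_form (isCompact_closedBall (0 : E2) 1)
    (convex_closedBall 0 1) (hf.continuous_fderiv one_ne_zero) hcrit
  refine ⟨fun t ↦ θ (sphPt t) - t, ρ ∘ sphPt,
    (hθ.comp_continuous continuous_sphPt hmem).sub continuous_id, fun t ↦ hρ _, ?_,
    fun t ↦ hpolar _ (hmem t) t, fun t ↦ ?_⟩
  · intro t
    simp only [sphPt_periodic t]
    ring
  · have hderiv := (hf.differentiable one_ne_zero (sphPt t)).hasFDerivAt.comp_hasDerivAt t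
      (hasDerivAt_sphPt t)
    rwa [hpolar _ (hmem t), ← sub_sub, cos_sub_pi_div_two] at hderiv

lemma fderiv_sphPt_nonneg_of_isMax (hf : Differentiable ℝ f)
    (hcrit : ∀ x ∈ Metric.ball (0 : E2) 1, fderiv ℝ f x ≠ 0) {t : ℝ}
    (ht : ∀ u, f (sphPt u) ≤ f (sphPt t)) : 0 ≤ fderiv ℝ f (sphPt t) (sphPt t) := by
  have hmax : IsMaxOn f (Metric.sphere 0 1) (sphPt t) := by
    rw [← range_sphPt]
    exact forall_mem_range.2 ht
  simpa using fderiv_radial_nonneg_of_isMaxOn_sphere hf.continuous.continuousOn hcrit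
    (hf (sphPt t)) (range_sphPt ▸ mem_range_self t) hmax

lemma fderiv_sphPt_nonpos_of_isMin (hf : Differentiable ℝ f)
    (hcrit : ∀ x ∈ Metric.ball (0 : E2) 1, fderiv ℝ f x ≠ 0) {t : ℝ}
    (ht : ∀ u, f (sphPt t) ≤ f (sphPt u)) : fderiv ℝ f (sphPt t) (sphPt t) ≤ 0 := by
  have hneg := fderiv_sphPt_nonneg_of_isMax (f := -f) hf.neg
    (fun x hx ↦ by simpa [fderiv_neg] using hcrit x hx) (t := t)
    (fun u ↦ neg_le_neg (ht u))
  simpa [fderiv_neg] using hneg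

lemma boundaryIndex_eq_neg_one_of_isMax (hf : Differentiable ℝ f)
    (hcrit : ∀ x ∈ Metric.ball (0 : E2) 1, fderiv ℝ f x ≠ 0) {α : ℝ → ℝ} {t r : ℝ} (hr : 0 < r)
    (hnormal : fderiv ℝ f (sphPt t) (sphPt t) = r * cos (α t)) (hsin : sin (α t) = 0)
    (ht : ∀ u, f (sphPt u) ≤ f (sphPt t)) : boundaryIndex (f ∘ sphPt) α t = -1 := by
  have hcos : 0 ≤ cos (α t) := nonneg_of_mul_nonneg_right
    (hnormal ▸ fderiv_sphPt_nonneg_of_isMax hf hcrit ht) hr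
  have hmax : IsLocalMax (f ∘ sphPt) t := .of_forall ht
  rw [boundaryIndex_of_isLocalMax hmax]
  rcases sin_eq_zero_iff_cos_eq.1 hsin with h | h <;> linarith

lemma boundaryIndex_eq_neg_one_of_isMin (hf : Differentiable ℝ f)
    (hcrit : ∀ x ∈ Metric.ball (0 : E2) 1, fderiv ℝ f x ≠ 0) {α : ℝ → ℝ} {t r : ℝ} (hr : 0 < r)
    (hnormal : fderiv ℝ f (sphPt t) (sphPt t) = r * cos (α t)) (hsin : sin (α t) = 0)
    (hnot : ¬IsLocalMax (f ∘ sphPt) t) (ht : ∀ u, f (sphPt t) ≤ f (sphPt u)) :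
    boundaryIndex (f ∘ sphPt) α t = -1 := by
  have hcos : cos (α t) ≤ 0 := nonpos_of_mul_nonpos_right
    (hnormal ▸ fderiv_sphPt_nonpos_of_isMin hf hcrit ht) hr
  rw [boundaryIndex_of_not_isLocalMax hnot]
  rcases sin_eq_zero_iff_cos_eq.1 hsin with h | h <;> linarith

lemma two_mul_card_le_card_add_two (hf : ContDiff ℝ 1 f)
    (hcrit : ∀ x ∈ Metric.closedBall (0 : E2) 1, fderiv ℝ f x ≠ 0) {S T : Finset ℝ} {c : ℝ}
    (hT : (T : Set ℝ) = Ico c (c + 2 * π) ∩ {t | IsLocalExtr (f ∘ sphPt) t}) (hne : T.Nonempty)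
    (hST : S ⊆ T)
    (hS : ∀ t ∈ S, (∀ u, f (sphPt u) ≤ f (sphPt t)) ∨ ∀ u, f (sphPt t) ≤ f (sphPt u)) :
    2 * S.card ≤ T.card + 2 := by
  obtain ⟨α, ρ, hα, hρ, hturn, hnormal, htangent⟩ := exists_polar_fderiv_on_circle hf hcrit
  have hf' : Differentiable ℝ f := hf.differentiable one_ne_zero
  have hcrit' : ∀ x ∈ Metric.ball (0 : E2) 1, fderiv ℝ f x ≠ 0 :=
    fun x hx ↦ hcrit x (Metric.ball_subset_closedBall hx)
  have hindexS : ∀ t ∈ S, boundaryIndex (f ∘ sphPt) α t = -1 := by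
    intro t ht
    obtain ⟨htc, hextr⟩ := hT.subset (hST ht)
    have hsin := sin_eq_zero_of_isLocalExtr (hρ t) (htangent t) hextr
    rcases hS t ht with hmax | hmin
    · exact boundaryIndex_eq_neg_one_of_isMax hf' hcrit' (hρ t) (hnormal t) hsin hmax
    · have hnot : ¬IsLocalMax (f ∘ sphPt) t :=
        not_isLocalMax_of_finite_isLocalExtr (hT ▸ T.finite_toSet) htc (.of_forall hmin)
      exact boundaryIndex_eq_neg_one_of_isMin hf' hcrit' (hρ t) (hnormal t) hsin hnot hmin
  have hsum : ∑ t ∈ T, boundaryIndex (f ∘ sphPt) α t = 2 * ((-1 : ℤ) : ℝ) :=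
    sum_boundaryIndex_eq_two_mul hα hρ htangent two_pi_pos.le (sphPt_periodic.comp f)
      (fun t ↦ by rw [hturn]; push_cast; ring) hT hne
  have hle : ∑ t ∈ T, boundaryIndex (f ∘ sphPt) α t ≤ (T.card : ℝ) - 2 * S.card :=
    sum_le_card_sub_two_mul_card hST (fun t _ ↦ boundaryIndex_le_one _ _ t) hindexS
  rw [hsum] at hle
  push_cast at hle
  exact_mod_cast (by linarith : 2 * (S.card : ℝ) ≤ T.card + 2)

theorem stmt_17_general {f : E2 → ℝ} (hf : ContDiff ℝ 1 f)
    (hcard : {t ∈ Ico 0 (2 * π) |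
        IsLocalMax (fun u ↦ f (sphPt u)) t ∨ IsLocalMin (fun u ↦ f (sphPt u)) t}.encard + 2 <
      2 * {t ∈ Ico 0 (2 * π) |
        (∀ u, f (sphPt u) ≤ f (sphPt t)) ∨ ∀ u, f (sphPt t) ≤ f (sphPt u)}.encard) :
    ∃ x ∈ Metric.closedBall (0 : E2) 1, fderiv ℝ f x = 0 := by
  by_contra! hcrit
  set T := {t ∈ Ico 0 (2 * π) |
    IsLocalMax (fun u ↦ f (sphPt u)) t ∨ IsLocalMin (fun u ↦ f (sphPt u)) t}
  set S := {t ∈ Ico 0 (2 * π) |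
    (∀ u, f (sphPt u) ≤ f (sphPt t)) ∨ ∀ u, f (sphPt t) ≤ f (sphPt u)} with hSdef
  have hST : S ⊆ T := fun t ht ↦ ⟨ht.1, ht.2.imp .of_forall .of_forall⟩
  have hTfin : T.Finite := encard_ne_top_iff.1 fun htop ↦ by simp [htop] at hcard
  have hT : T = Ico 0 (0 + 2 * π) ∩ {t | IsLocalExtr (f ∘ sphPt) t} := by
    ext t
    simp only [zero_add]
    exact and_congr_right fun _ ↦ or_comm
  lift T to Finset ℝ using hTfin with T'
  lift S to Finset ℝ using T'.finite_toSet.subset hST with S'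
  rw [encard_coe_eq_coe_finsetCard, encard_coe_eq_coe_finsetCard] at hcard
  norm_cast at hcard hST
  have hne : T'.Nonempty := (Finset.card_pos.1 (by omega : 0 < S'.card)).mono hST
  have hle := two_mul_card_le_card_add_two hf hcrit hT hne hST
    fun t ht ↦ (hSdef.subset ht).2
  omega

end Disk

/-- Let `h : S¹ → ℝ³` be a C^∞ map (encoded by the 2π-periodic smooth curve
`c = h ∘ (cos, sin)`), `ξ` a unit vector in ℝ³ and `π(x) = ⟪x, ξ⟫`. Suppose `π ∘ h` has
exactly `n` local extremum points on the circle (`n` finite and positive), of which exactly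
`s` are absolute extrema, with `s > n/2 + 1` (i.e. `n + 2 < 2s`). Then every C^∞ map
`H : ℝ² → ℝ³` with `H = h` on `S¹` whose derivative is injective at every point of the closed
unit disk has a point `x` of the closed unit disk where the derivative of `π ∘ H` vanishes,
i.e. the normal direction of the immersed disk at `x` is parallel to `ξ`. -/
theorem stmt_17 (c : ℝ → E3) (hc : ContDiff ℝ (⊤ : ℕ∞) c)
    (hper : Function.Periodic c (2 * Real.pi))
    (ξ : E3) (hξ : ‖ξ‖ = 1) (n s : ℕ) (hn : 0 < n)
    (hT : {t ∈ Set.Ico (0 : ℝ) (2 * Real.pi) |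
      IsLocalMax (fun u : ℝ => ⟪c u, ξ⟫) t ∨
        IsLocalMin (fun u : ℝ => ⟪c u, ξ⟫) t}.encard = (n : ℕ∞))
    (hS : {t ∈ Set.Ico (0 : ℝ) (2 * Real.pi) |
      (∀ u : ℝ, ⟪c u, ξ⟫ ≤ ⟪c t, ξ⟫) ∨
        (∀ u : ℝ, (⟪c t, ξ⟫ : ℝ) ≤ ⟪c u, ξ⟫)}.encard = (s : ℕ∞))
    (hs : n + 2 < 2 * s)
    (H : E2 → E3) (hH : ContDiff ℝ (⊤ : ℕ∞) H) (hHb : ∀ t : ℝ, H (sphPt t) = c t)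
    (himm : ∀ x ∈ Metric.closedBall (0 : E2) 1, Function.Injective (fderiv ℝ H x)) :
    ∃ x ∈ Metric.closedBall (0 : E2) 1, fderiv ℝ (fun y : E2 => ⟪H y, ξ⟫) x = 0 := by
  obtain rfl : (fun t ↦ H (sphPt t)) = c := funext hHb
  exact stmt_17_general ((hH.inner ℝ contDiff_const).of_le (by exact_mod_cast le_top))
    (by rw [hT, hS]; exact_mod_cast hs)
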